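/- Let G be a finite group of order n > 1, let q be the smallest prime divisor of n and p the largest prime divisor of n. If G is not solvable, or if some Sylow p-subgroup of G contains no cyclic subgroup of index p, then 2(q-1)·ψ(G) < ψ(C_n), and in particular q·ψ(G) < ψ(C_n). -/

import Mathlib

/-- `psi G` is the sum of the orders of all elements of the finite group `G`. -/
noncomputable def psi (G : Type*) [Group G] [Fintype G] : ℕ := ∑ x : G, orderOf x

/-- `psiC n` is the sum of the orders of all elements of the cyclic group `C_n`. -/
noncomputable def psiC (n : ℕ) : ℕ := ∑ k ∈ Finset.range n, addOrderOf (k : ZMod n)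

section PsiBounds

open Finset

theorem psi_eq_psiC_of_isCyclic (G : Type*) [Group G] [Fintype G] [IsCyclic G] :
    psi G = psiC (Fintype.card G) := by
  classical
  obtain ⟨g, hg⟩ := IsCyclic.exists_generator (α := G)
  have hcard : orderOf g = Fintype.card G := by
    rw [orderOf_eq_card_of_forall_mem_zpowers hg, Nat.card_eq_fintype_card]
  rw [psi, psiC, ← IsCyclic.image_range_orderOf hg, sum_image, hcard]
  · refine sum_congr rfl fun k _ => ?_
    rw [ZMod.addOrderOf_coe k Fintype.card_ne_zero, orderOf_pow, hcard]
  · intro a ha b hb hab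
    exact pow_injOn_Iio_orderOf (by simpa using ha) (by simpa using hb) hab

theorem psi_prod_of_coprime (G H : Type*) [Group G] [Group H] [Fintype G] [Fintype H]
    (h : (Fintype.card G).Coprime (Fintype.card H)) : psi (G × H) = psi G * psi H := by
  simp only [psi, Fintype.sum_prod_type, sum_mul_sum]
  refine sum_congr rfl fun a _ => sum_congr rfl fun b _ => ?_
  rw [Prod.orderOf_mk, Nat.Coprime.lcm_eq_mul]
  exact Nat.Coprime.of_dvd orderOf_dvd_card orderOf_dvd_card h

theorem psiC_eq_psi (n : ℕ) [NeZero n] : psiC n = psi (Multiplicative (ZMod n)) := by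
  rw [psi_eq_psiC_of_isCyclic, Fintype.card_multiplicative, ZMod.card]

theorem psiC_mul {m n : ℕ} (hm : m ≠ 0) (hn : n ≠ 0) (h : m.Coprime n) :
    psiC (m * n) = psiC m * psiC n := by
  have : NeZero m := ⟨hm⟩
  have : NeZero n := ⟨hn⟩
  have : IsCyclic (Multiplicative (ZMod m) × Multiplicative (ZMod n)) := by
    rw [Group.isCyclic_prod_iff]
    simpa using ⟨inferInstance, inferInstance, h⟩
  rw [psiC_eq_psi m, psiC_eq_psi n, ← psi_prod_of_coprime _ _ (by simpa using h),
    psi_eq_psiC_of_isCyclic]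
  simp

theorem psi_eq_sum_divisors (G : Type*) [Group G] [Fintype G] [IsCyclic G] :
    psi G = ∑ d ∈ (Fintype.card G).divisors, d * d.totient := by
  classical
  rw [psi, ← sum_fiberwise_of_maps_to (g := orderOf) (t := (Fintype.card G).divisors)
    (by intro x _; simp [orderOf_dvd_card])]
  refine sum_congr rfl fun d hd => ?_
  rw [sum_congr rfl (g := fun _ => d) (by simp), sum_const,
    IsCyclic.card_orderOf_eq_totient (Nat.dvd_of_mem_divisors hd), smul_eq_mul, mul_comm]

theorem psiC_prime_pow {p : ℕ} (hp : p.Prime) (a : ℕ) :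
    psiC (p ^ a) * (p + 1) = p * (p ^ a) ^ 2 + 1 := by
  have : NeZero p := ⟨hp.ne_zero⟩
  rw [psiC_eq_psi, psi_eq_sum_divisors, Fintype.card_multiplicative, ZMod.card,
    Nat.sum_divisors_prime_pow hp]
  induction a with
  | zero => simp
  | succ a ih =>
    rw [sum_range_succ, add_mul, ih, Nat.totient_prime_pow_succ hp]
    obtain ⟨k, rfl⟩ := Nat.exists_eq_add_of_le' hp.one_le
    simp only [Nat.add_sub_cancel]
    ring

/-- The bound `ψ(C_m) ≥ q / (k + 1) * m ^ 2` when all prime factors of `m` lie in `[q, k]`. -/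
theorem mul_sq_le_psiC_mul {q k : ℕ} (hq : q ≤ k + 1) {m : ℕ} (hm : m ≠ 0)
    (h : ∀ r : ℕ, r.Prime → r ∣ m → q ≤ r ∧ r ≤ k) :
    q * m ^ 2 ≤ psiC m * (k + 1) := by
  induction k generalizing m with
  | zero =>
    have : m = 1 := by
      by_contra h1
      obtain ⟨r, hr, hrm⟩ := Nat.exists_prime_and_dvd h1
      have := (h r hr hrm).2
      have := hr.pos
      omega
    subst this
    simpa [psiC] using hq
  | succ k ih =>
    rcases hq.eq_or_lt with hq' | hq'
    · have : m = 1 := by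
        by_contra h1
        obtain ⟨r, hr, hrm⟩ := Nat.exists_prime_and_dvd h1
        have := h r hr hrm
        omega
      subst this
      simpa [psiC] using hq
    replace hq : q ≤ k + 1 := by omega
    by_cases hd : (k + 1).Prime ∧ (k + 1) ∣ m
    · obtain ⟨hp, hd⟩ := hd
      obtain ⟨a, b, hb, rfl⟩ := Nat.exists_eq_pow_mul_and_not_dvd hm (k + 1) hp.ne_one
      have hb0 : b ≠ 0 := by rintro rfl; simp at hb
      have hb' := ih hq hb0 fun r hr hrb => by
        have h2 := h r hr (hrb.mul_left _)
        have : r ≠ k + 1 := by rintro rfl; exact hb hrb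
        omega
      rw [psiC_mul (pow_ne_zero _ hp.ne_zero) hb0
        (((Nat.Prime.coprime_iff_not_dvd hp).2 hb).pow_left a)]
      have h3 := psiC_prime_pow hp a
      have h4 : (k + 1) * ((k + 1) ^ a) ^ 2 ≤ psiC ((k + 1) ^ a) * (k + 1 + 1) := by omega
      have h5 := Nat.mul_le_mul h4 hb'
      refine le_of_mul_le_mul_left (a := k + 1) ?_ k.succ_pos
      calc _ = _ := by ring
        _ ≤ _ := h5
        _ = _ := by ring
    · refine (ih hq hm fun r hr hrm => ?_).trans (Nat.mul_le_mul_left _ (by omega))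
      have h2 := h r hr hrm
      have : r ≠ k + 1 := by rintro rfl; exact hd ⟨hr, hrm⟩
      omega

theorem exists_card_mul_orderOf_ge (G : Type*) [Group G] [Fintype G] :
    ∃ x : G, psi G ≤ Fintype.card G * orderOf x := by
  obtain ⟨x, -, hx⟩ := exists_max_image (univ : Finset G) orderOf ⟨1, mem_univ _⟩
  refine ⟨x, ?_⟩
  rw [← smul_eq_mul, ← card_univ]
  exact sum_le_card_nsmul _ _ _ hx

/-- If `ψ(G)` is large, then `G` has a cyclic subgroup of index less than `2 * p`. -/
theorem exists_index_zpowers_lt {G : Type*} [Group G] [Fintype G] {p q : ℕ} (hq : 0 < q)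
    (hqp : q ≤ p) (h : ∀ r : ℕ, r.Prime → r ∣ Fintype.card G → q ≤ r ∧ r ≤ p)
    (hpsi : psiC (Fintype.card G) ≤ 2 * (q - 1) * psi G) :
    ∃ x : G, (Subgroup.zpowers x).index < 2 * p := by
  obtain ⟨x, hx⟩ := exists_card_mul_orderOf_ge G
  refine ⟨x, ?_⟩
  have h1 := mul_sq_le_psiC_mul (by omega : q ≤ p + 1) Fintype.card_ne_zero h
  have h2 := (Subgroup.zpowers x).card_mul_index
  rw [Nat.card_zpowers, Nat.card_eq_fintype_card] at h2
  have hn : 0 < Fintype.card G := Fintype.card_pos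
  set n := Fintype.card G
  set m := (Subgroup.zpowers x).index
  have ho : 0 < orderOf x := orderOf_pos x
  obtain ⟨k, rfl⟩ := Nat.exists_eq_add_of_le' hq
  simp only [Nat.add_sub_cancel] at hpsi
  have h3 : (k + 1) * n ^ 2 ≤ 2 * k * (n * orderOf x) * (p + 1) :=
    h1.trans (Nat.mul_le_mul_right _ (hpsi.trans (Nat.mul_le_mul_left _ hx)))
  have h4 : (n * orderOf x) * ((k + 1) * m) ≤ (n * orderOf x) * (2 * k * (p + 1)) := by
    calc _ = (k + 1) * (n * (orderOf x * m)) := by ring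
      _ = (k + 1) * n ^ 2 := by rw [h2, sq]
      _ ≤ _ := h3
      _ = _ := by ring
  have h5 := Nat.le_of_mul_le_mul_left h4 (by positivity)
  refine Nat.lt_of_mul_lt_mul_left (a := k + 1) ?_
  nlinarith

theorem exists_mk_eq_pow_orderOf_eq_one {G : Type*} [Group G] [Finite G] (P : Subgroup G) [P.Normal]
    (h : (Nat.card P).Coprime P.index) (c : G ⧸ P) :
    ∃ g : G, (g : G ⧸ P) = c ∧ g ^ orderOf c = 1 := by
  obtain ⟨g, rfl⟩ := QuotientGroup.mk_surjective c
  have hd : orderOf (g : G ⧸ P) ∣ P.index := orderOf_dvd_natCard _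
  obtain ⟨t, ht1, ht2⟩ := Nat.chineseRemainder
    (Nat.Coprime.coprime_dvd_left hd h.symm) 1 0
  refine ⟨g ^ t, ?_, ?_⟩
  · rw [QuotientGroup.mk_pow, pow_eq_pow_iff_modEq.2 ht1, pow_one]
  · obtain ⟨s, rfl⟩ := (Nat.modEq_zero_iff_dvd).1 ht2
    have hmem : g ^ orderOf (g : G ⧸ P) ∈ P := by
      rw [← QuotientGroup.eq_one_iff, QuotientGroup.mk_pow, pow_orderOf_eq_one]
    rw [← pow_mul, mul_comm, pow_mul, pow_mul]
    have : (g ^ orderOf (g : G ⧸ P)) ^ Nat.card P = 1 := by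
      exact congrArg Subtype.val (pow_card_eq_one' (x := (⟨_, hmem⟩ : P)))
    rw [this, one_pow]

theorem zpowers_normal_of_mem {G : Type*} [Group G] [Finite G] (P : Subgroup G) [P.Normal]
    [IsCyclic P] {u : G} (hu : u ∈ P) : (Subgroup.zpowers u).Normal := by
  refine ⟨fun v hv g => ?_⟩
  obtain ⟨s, rfl⟩ := Subgroup.mem_zpowers_iff.1 hv
  obtain ⟨m, hm⟩ := ((MulAut.conjNormal g : MulAut P) : P →* P).map_cyclic
  have h : g * u * g⁻¹ = u ^ m := congrArg Subtype.val (hm ⟨u, hu⟩)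
  rw [← conj_zpow, h]
  exact zpow_mem (zpow_mem (Subgroup.mem_zpowers u) m) s

theorem orderOf_mul_dvd {G : Type*} [Group G] {u k : G}
    [hZ : (Subgroup.zpowers u).Normal] {d : ℕ} (hk : k ^ d = 1) :
    orderOf (u * k) ∣ d * orderOf u := by
  have h : (u * k) ^ d ∈ Subgroup.zpowers u := by
    rw [← QuotientGroup.eq_one_iff, QuotientGroup.mk_pow, QuotientGroup.mk_mul,
      (QuotientGroup.eq_one_iff u).2 (Subgroup.mem_zpowers u), one_mul, ← QuotientGroup.mk_pow,
      hk, QuotientGroup.mk_one]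
  obtain ⟨s, hs⟩ := Subgroup.mem_zpowers_iff.1 h
  apply orderOf_dvd_of_pow_eq_one
  rw [pow_mul, ← hs, ← zpow_natCast, ← zpow_mul, mul_comm, zpow_mul, zpow_natCast,
    pow_orderOf_eq_one, one_zpow]

theorem psi_le_psi_mul_psi_quotient {G : Type*} [Group G] [Fintype G] (P : Subgroup G) [P.Normal]
    [IsCyclic P] [Fintype P] [Fintype (G ⧸ P)] (h : (Nat.card P).Coprime P.index) :
    psi G ≤ psi P * psi (G ⧸ P) := by
  choose k hk1 hk2 using exists_mk_eq_pow_orderOf_eq_one P h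
  let f : P × (G ⧸ P) → G := fun x => x.1 * k x.2
  have hf : Function.Surjective f := fun g =>
    ⟨(⟨g * (k g)⁻¹, by
      rw [← QuotientGroup.eq_one_iff, QuotientGroup.mk_mul, QuotientGroup.mk_inv, hk1,
        mul_inv_cancel]⟩, g), by simp [f]⟩
  have hf' : Function.Bijective f := by
    rw [Fintype.bijective_iff_surjective_and_card]
    refine ⟨hf, ?_⟩
    rw [Fintype.card_prod, ← Nat.card_eq_fintype_card, ← Nat.card_eq_fintype_card,
      ← Nat.card_eq_fintype_card, ← P.card_mul_index, Subgroup.index]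
  rw [psi, ← hf'.sum_comp, Fintype.sum_prod_type, psi, psi, sum_mul_sum]
  refine sum_le_sum fun u _ => sum_le_sum fun c _ => ?_
  have := zpowers_normal_of_mem P u.2
  refine (Nat.le_of_dvd ?_ (orderOf_mul_dvd (hk2 c))).trans_eq ?_
  · exact Nat.mul_pos (orderOf_pos _) (orderOf_pos _)
  · rw [mul_comm, Subgroup.orderOf_coe]

end PsiBounds

section Solvability

open Subgroup

theorem isSolvable_of_isMulCommutative {G : Type*} [Group G] [IsMulCommutative G] :
    Group.IsSolvable G :=
  Group.isSolvable_of_comm mul_comm'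

theorem isSolvable_of_sup_eq_top {G : Type*} [Group G] (N A : Subgroup G) [N.Normal]
    [Group.IsSolvable N] [Group.IsSolvable A] (h : N ⊔ A = ⊤) : Group.IsSolvable G := by
  rw [Group.isSolvable_iff_subgroup_quotient N]
  refine ⟨inferInstance, ?_⟩
  refine Group.isSolvable_of_surjective (f := (QuotientGroup.mk' N).comp A.subtype) ?_
  have hN : N.map (QuotientGroup.mk' N) = ⊥ := by
    rw [Subgroup.map_eq_bot_iff, QuotientGroup.ker_mk']
  rw [← MonoidHom.range_eq_top, MonoidHom.range_comp, range_subtype,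
    ← bot_sup_eq (A.map (QuotientGroup.mk' N)), ← hN, ← Subgroup.map_sup, h,
    ← MonoidHom.range_eq_map, MonoidHom.range_eq_top]
  exact QuotientGroup.mk'_surjective N

theorem isSolvable_of_normal_isCoatom {G : Type*} [Group G] (N : Subgroup G) [N.Normal]
    [Group.IsSolvable N] (h : IsCoatom N) : Group.IsSolvable G := by
  obtain ⟨g, hg⟩ : ∃ g, g ∉ N := by
    by_contra! hN
    exact h.1 (eq_top_iff.2 fun x _ => hN x)
  have := isSolvable_of_isMulCommutative (G := zpowers g)
  refine isSolvable_of_sup_eq_top N (zpowers g) (h.2 _ ?_)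
  exact left_lt_sup.2 fun hle => hg (hle (mem_zpowers g))

theorem isCoatom_of_index_prime {G : Type*} [Group G] {A : Subgroup G} (h : A.index.Prime) :
    IsCoatom A := by
  refine ⟨fun hA => h.ne_one (index_eq_one.2 hA), fun M hM => ?_⟩
  have h1 := relIndex_mul_index hM.le
  rcases (Nat.dvd_prime h).1 (Dvd.intro_left _ h1) with h2 | h2
  · exact index_eq_one.1 h2
  · rw [h2] at h1
    exact absurd (relIndex_eq_one.1 (Nat.eq_of_mul_eq_mul_right h.pos (h1.trans (one_mul _).symm)))
      hM.not_ge

/-- A non-normal abelian maximal subgroup `A` meets the center in a subgroup whose index in `A`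
is at most the index of `A` in the group. -/
theorem exists_le_center_relIndex_le {G : Type*} [Group G] [Finite G] (A : Subgroup G)
    [IsMulCommutative A] (hA : IsCoatom A) (hn : ¬ A.Normal) :
    ∃ N : Subgroup G, N ≤ center G ∧ N ≤ A ∧ N.relIndex A ≤ A.index := by
  obtain ⟨g, hg⟩ : ∃ g : G, A.map (MulAut.conj g).toMonoidHom ≠ A := by
    by_contra! h
    refine hn ⟨fun a ha g => ?_⟩
    rw [← h g]
    exact mem_map_of_mem (MulAut.conj g).toMonoidHom ha
  set B := A.map (MulAut.conj g).toMonoidHom with hB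
  have : IsMulCommutative B := inferInstance
  have hcard : Nat.card B = Nat.card A :=
    card_map_of_injective (MulAut.conj g).injective
  have hAB : A ⊔ B = ⊤ := hA.2 _ <| left_lt_sup.2 fun hle =>
    hg (eq_of_le_of_card_ge hle hcard.ge)
  refine ⟨A ⊓ B, ?_, inf_le_left, ?_⟩
  · rw [← centralizer_univ, ← coe_top, le_centralizer_iff, ← hAB, sup_le_iff]
    exact ⟨(le_centralizer A).trans (centralizer_le inf_le_left),
      (le_centralizer B).trans (centralizer_le inf_le_right)⟩
  · rw [inf_relIndex_left]
    have h1 : B.index = A.index := index_map_equiv A (MulAut.conj g)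
    rw [← h1, ← relIndex_top_right]
    exact relIndex_le_of_le_right le_top (by rw [relIndex_top_right]; exact index_ne_zero_of_finite)

theorem isCoatom_map_mk {G : Type*} [Group G] {N A : Subgroup G} [N.Normal] (hNA : N ≤ A)
    (hA : IsCoatom A) : IsCoatom (A.map (QuotientGroup.mk' N)) := by
  have hc : (A.map (QuotientGroup.mk' N)).comap (QuotientGroup.mk' N) = A := by
    rw [comap_map_eq, QuotientGroup.ker_mk', sup_eq_left.2 hNA]
  refine ⟨fun h => hA.1 ?_, fun M hM => ?_⟩
  · rw [← hc, h, comap_top]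
  · have hs := QuotientGroup.mk'_surjective N
    have := hA.2 (M.comap (QuotientGroup.mk' N)) (by
      conv_lhs => rw [← hc]
      exact (comap_lt_comap_of_surjective hs).2 hM)
    exact comap_injective hs (this.trans (comap_top _).symm)

theorem normal_of_le_center {G : Type*} [Group G] {N : Subgroup G} (h : N ≤ center G) :
    N.Normal := ⟨fun n hn g => by
  rwa [mem_center_iff.1 (h hn) g, mul_inv_cancel_right]⟩

/-- A finite group with an abelian maximal subgroup of prime-power order is solvable. -/
theorem isSolvable_of_isPGroup_isCoatom {G : Type*} [Group G] [Finite G] {p : ℕ} [Fact p.Prime]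
    (A : Subgroup G) [IsMulCommutative A] (hA : IsCoatom A) (hp : IsPGroup p A) :
    Group.IsSolvable G := by
  by_cases hn : A.Normal
  · have := isSolvable_of_isMulCommutative (G := A)
    exact isSolvable_of_normal_isCoatom A hA
  obtain ⟨S, hS⟩ := hp.exists_le_sylow
  rcases hA.le_iff.1 hS with hS | hS
  · have hG : IsPGroup p G := by
      have h := S.2
      rw [hS] at h
      exact h.of_equiv topEquiv
    have := hG.isNilpotent
    infer_instance
  subst hS
  have hN : normalizer (S : Set G) = S := by
    rcases hA.le_iff.1 (le_normalizer (H := (S : Subgroup G))) with h | h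
    · exact absurd (normalizer_eq_top_iff.1 h) hn
    · exact h
  have hC : normalizer (S : Set G) ≤ centralizer (S : Set G) := hN.trans_le (le_centralizer _)
  have hK := MonoidHom.ker_transferSylow_isComplement' S hC
  have hpK := MonoidHom.not_dvd_card_ker_transferSylow S hC
  set K := (MonoidHom.transferSylow S hC).ker
  have hK1 : Nat.card K ≠ 1 := fun h => hA.1 (by
    have := hK.sup_eq_top
    rwa [card_eq_one.1 h, bot_sup_eq] at this)
  obtain ⟨r, hr, hrK⟩ := Nat.exists_prime_and_dvd hK1
  have := Fact.mk hr
  obtain ⟨R⟩ : Nonempty (Sylow r K) := inferInstance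
  have hM := Sylow.normalizer_sup_eq_top R
  have hRp : IsPGroup r ((R : Subgroup K).map K.subtype) := R.2.map _
  have hrR : r ∣ Nat.card ((R : Subgroup K).map K.subtype) := by
    rw [card_map_of_injective K.subtype_injective]
    exact R.dvd_card_of_dvd_card hrK
  set Q := (R : Subgroup K).map K.subtype
  set M := normalizer (Q : Set G)
  have hSM : Nat.card S ∣ Nat.card M := by
    rw [← hK.symm.index_eq_card, ← relIndex_top_right, ← hM, relIndex_sup_right]
    exact relIndex_dvd_card _ _
  obtain ⟨k, hk⟩ := S.2.exists_card_eq
  rw [hk] at hSM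
  obtain ⟨H, hH⟩ := Sylow.exists_subgroup_card_pow_prime p hSM
  have hHc : Nat.card (H.map M.subtype) = p ^ k := by
    rw [card_map_of_injective M.subtype_injective, hH]
  obtain ⟨T, hT⟩ := (IsPGroup.of_card hHc).exists_le_sylow
  obtain ⟨g, rfl⟩ := MulAction.exists_smul_eq G S T
  have hTc : Nat.card (g • S : Sylow p G) = p ^ k := by
    rw [← hk]; exact Nat.card_congr (Sylow.equiv _ _).toEquiv
  have hT' := eq_of_le_of_card_ge hT (hTc.trans hHc.symm).le
  have hTM : ((g • S : Sylow p G) : Subgroup G) ≤ M := hT' ▸ map_subtype_le H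
  have hTcoatom : IsCoatom ((g • S : Sylow p G) : Subgroup G) := by
    have := ((MulAut.conj g).mapSubgroup.isCoatom_iff (S : Subgroup G)).2 hA
    exact this
  have : Group.IsSolvable (g • S : Sylow p G) := by
    have := (g • S : Sylow p G).2.isNilpotent
    infer_instance
  have : Group.IsSolvable Q := by
    have := hRp.isNilpotent
    infer_instance
  have hQT : ¬ Q ≤ ((g • S : Sylow p G) : Subgroup G) := fun hle => by
    have h1 : r ∣ p ^ k := hTc ▸ hrR.trans (card_dvd_of_le hle)
    have h2 := (Nat.prime_dvd_prime_iff_eq hr Fact.out).1 (hr.dvd_of_dvd_pow h1)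
    exact hpK (h2 ▸ hrK)
  rcases hTcoatom.le_iff.1 hTM with h | h
  · have : Q.Normal := normalizer_eq_top_iff.1 h
    exact isSolvable_of_sup_eq_top Q _ (hTcoatom.2 _ (right_lt_sup.2 hQT))
  · exact absurd (le_normalizer.trans h.le) hQT

theorem isSolvable_of_index_prime_of_card_le {G : Type*} [Group G] [Finite G] {p : ℕ}
    [hp : Fact p.Prime] (A : Subgroup G) [IsMulCommutative A] (hA : A.index = p)
    (hle : Nat.card A ≤ p) : Group.IsSolvable G := by
  have hG := A.card_mul_index
  rw [hA] at hG
  rcases hle.eq_or_lt with h | h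
  · rw [h, ← sq] at hG
    have := (IsPGroup.of_card hG.symm).isNilpotent
    infer_instance
  obtain ⟨P⟩ : Nonempty (Sylow p G) := inferInstance
  have hPd : p ∣ Nat.card P := P.dvd_card_of_dvd_card (Dvd.intro_left _ hG)
  have hPi : (P : Subgroup G).index ≤ Nat.card A := by
    obtain ⟨s, hs⟩ := hPd
    have h1 := (P : Subgroup G).card_mul_index
    rw [hs, ← hG, mul_comm (Nat.card A), mul_assoc] at h1
    exact Nat.le_of_dvd Nat.card_pos (Dvd.intro_left _ (Nat.eq_of_mul_eq_mul_left hp.out.pos h1))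
  have hlt : Nat.card (Sylow p G) < p :=
    ((Nat.le_of_dvd (Nat.pos_of_ne_zero index_ne_zero_of_finite) P.card_dvd_index).trans
      hPi).trans_lt h
  have h1 : Nat.card (Sylow p G) = 1 :=
    Nat.ModEq.eq_of_lt_of_lt (card_sylow_modEq_one p G) hlt hp.out.one_lt
  have := (Nat.card_eq_one_iff_unique.1 h1).1
  have := P.normal_of_subsingleton
  have := P.2.isNilpotent
  have hs : Group.IsSolvable (P : Subgroup G) := inferInstance
  have := isSolvable_of_isMulCommutative (G := A)
  have hco : IsCoatom A := isCoatom_of_index_prime (hA ▸ hp.out)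
  refine isSolvable_of_sup_eq_top (P : Subgroup G) A (hco.2 _ (right_lt_sup.2 fun hPA => ?_))
  exact absurd (Nat.le_of_dvd Nat.card_pos (hPd.trans (card_dvd_of_le hPA))) h.not_ge

theorem isSolvable_of_index_prime {G : Type*} [Group G] [Finite G] {p : ℕ}
    [hp : Fact p.Prime] (A : Subgroup G) [IsMulCommutative A] (hA : A.index = p) :
    Group.IsSolvable G := by
  have hco : IsCoatom A := isCoatom_of_index_prime (hA ▸ hp.out)
  have := isSolvable_of_isMulCommutative (G := A)
  by_cases hn : A.Normal
  · exact isSolvable_of_normal_isCoatom A hco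
  obtain ⟨N, hNc, hNA, hN⟩ := exists_le_center_relIndex_le A hco hn
  have := normal_of_le_center hNc
  rw [Group.isSolvable_iff_subgroup_quotient N]
  refine ⟨Group.isSolvable_of_isSolvable_injective (inclusion_injective hNA), ?_⟩
  refine isSolvable_of_index_prime_of_card_le (p := p) (A.map (QuotientGroup.mk' N)) ?_ ?_
  · rw [index_map_eq _ (QuotientGroup.mk'_surjective N) (by rwa [QuotientGroup.ker_mk']), hA]
  · rwa [← relIndex_ker, QuotientGroup.ker_mk', ← hA]

theorem isCoatom_normalizer_sylow {G : Type*} [Group G] [Finite G] {p : ℕ}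
    [hp : Fact p.Prime] (P : Sylow p G) (hP : (normalizer (P : Set G)).index = p + 1) :
    IsCoatom (normalizer (P : Set G)) := by
  refine ⟨fun h => ?_, fun M hM => ?_⟩
  · rw [h, index_top] at hP
    exact hp.out.ne_zero (by omega)
  have hPM : (P : Subgroup G) ≤ M := le_normalizer.trans hM.le
  have h1 := card_sylow_modEq_one p M
  have h2 : Nat.card (Sylow p M) = (normalizer (P : Set G)).relIndex M := by
    rw [(P.subtype hPM).card_eq_index_normalizer, relIndex]
    exact congrArg index (subgroupOf_normalizer_eq hPM).symm
  rw [h2] at h1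
  have h3 := relIndex_mul_index hM.le
  rw [hP] at h3
  have h4 : (normalizer (P : Set G)).relIndex M ≠ 1 := fun h => hM.not_ge (relIndex_eq_one.1 h)
  set a := (normalizer (P : Set G)).relIndex M
  have ha : a ≠ 0 := by rintro h; simp [h] at h3
  have hpa : p ∣ a - 1 := (Nat.modEq_iff_dvd' (by omega)).1 h1.symm
  have hle := Nat.le_of_dvd (by omega) hpa
  rw [← index_eq_one]
  have : M.index ≠ 0 := index_ne_zero_of_finite
  by_contra hM1
  have : (p + 1) * 2 ≤ p + 1 := h3 ▸ Nat.mul_le_mul (by omega) (by omega)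
  omega

theorem isSolvable_of_index_normalizer_sylow {G : Type*} [Group G] [Finite G] {p : ℕ}
    [hp : Fact p.Prime] (P : Sylow p G) [IsMulCommutative (normalizer (P : Set G))]
    (hP : (normalizer (P : Set G)).index = p + 1) : Group.IsSolvable G := by
  have hco := isCoatom_normalizer_sylow P hP
  have hPA : (P : Subgroup G) ≤ normalizer (P : Set G) := le_normalizer
  have hPn : ¬ (P : Subgroup G).Normal := fun h => hco.1 (normalizer_eq_top_iff.2 h)
  set A := normalizer (P : Set G)
  have := isSolvable_of_isMulCommutative (G := A)
  by_cases hn : A.Normal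
  · exact isSolvable_of_normal_isCoatom A hco
  obtain ⟨N, hNc, hNA, hN⟩ := exists_le_center_relIndex_le A hco hn
  have := normal_of_le_center hNc
  rw [Group.isSolvable_iff_subgroup_quotient N]
  refine ⟨Group.isSolvable_of_isSolvable_injective (inclusion_injective hNA), ?_⟩
  refine isSolvable_of_isPGroup_isCoatom (p := p) _ (isCoatom_map_mk hNA hco) ?_
  have hpd : p ∣ N.relIndex A := by
    have h1 : N.relIndex P ∣ N.relIndex A := by
      have := relIndex_ker P (QuotientGroup.mk' N)
      have h2 := relIndex_ker A (QuotientGroup.mk' N)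
      rw [QuotientGroup.ker_mk'] at this h2
      rw [this, h2]
      exact card_dvd_of_le (map_mono hPA)
    have h2 : N.relIndex P ∣ Nat.card P := relIndex_dvd_card _ _
    obtain ⟨k, hk⟩ := P.2.exists_card_eq
    rw [hk] at h2
    obtain ⟨j, -, hj⟩ := (Nat.dvd_prime_pow hp.out).1 h2
    rcases j.eq_zero_or_pos with rfl | hj0
    · exact absurd (normal_of_le_center ((relIndex_eq_one.1 hj).trans hNc)) hPn
    · exact (dvd_pow_self p hj0.ne').trans (hj ▸ h1)
  have hcard : N.relIndex A = p := by
    have := hp.out.two_le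
    exact Nat.eq_of_dvd_of_lt_two_mul index_ne_zero_of_finite hpd (by omega)
  refine IsPGroup.of_card (n := 1) ?_
  rw [← relIndex_ker, QuotientGroup.ker_mk', hcard, pow_one]

/-- A finite group with a cyclic subgroup of index less than `2 * p` is solvable or has a cyclic
normal Sylow `p`-subgroup. -/
theorem isSolvable_or_exists_normal_cyclic_sylow {G : Type*} [Group G] [Finite G] {p : ℕ}
    [hp : Fact p.Prime] (A : Subgroup G) [IsCyclic A] (hA : A.index < 2 * p) :
    Group.IsSolvable G ∨ ∃ P : Sylow p G, (P : Subgroup G).Normal ∧ IsCyclic P := by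
  have hA0 : A.index ≠ 0 := index_ne_zero_of_finite
  by_cases hpA : p ∣ A.index
  · left
    exact isSolvable_of_index_prime A (Nat.eq_of_dvd_of_lt_two_mul hA0 hpA hA)
  obtain ⟨R⟩ : Nonempty (Sylow p A) := inferInstance
  set Q := (R : Subgroup A).map A.subtype
  have hQp : IsPGroup p Q := R.2.map _
  have hQi : ¬ p ∣ Q.index := by
    rw [index_map_subtype, hp.out.dvd_mul, not_or]
    exact ⟨R.not_dvd_index, hpA⟩
  let P : Sylow p G := hQp.toSylow hQi
  have hPQ : (P : Subgroup G) = Q := rfl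
  have hPA : (P : Subgroup G) ≤ A := hPQ ▸ map_subtype_le _
  have hPc : IsCyclic P := isCyclic_of_injective _ (inclusion_injective hPA)
  by_cases hn : (P : Subgroup G).Normal
  · exact Or.inr ⟨P, hn, hPc⟩
  left
  have hAN : A ≤ normalizer (P : Set G) :=
    (le_centralizer A).trans ((centralizer_le hPA).trans (centralizer_le_normalizer _))
  have h1 := card_sylow_modEq_one p G
  rw [P.card_eq_index_normalizer] at h1
  have h3 := relIndex_mul_index hAN
  have h4 : (normalizer (P : Set G)).index ≠ 1 := fun h =>
    hn (normalizer_eq_top_iff.1 (index_eq_one.1 h))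
  have hm0 : (normalizer (P : Set G)).index ≠ 0 := index_ne_zero_of_finite
  have hr0 : A.relIndex (normalizer (P : Set G)) ≠ 0 := index_ne_zero_of_finite
  have hpa : p ∣ (normalizer (P : Set G)).index - 1 := (Nat.modEq_iff_dvd' (by omega)).1 h1.symm
  have hle := Nat.le_of_dvd (by omega) hpa
  have hr1 : A.relIndex (normalizer (P : Set G)) = 1 := by
    have : A.relIndex (normalizer (P : Set G)) < 2 := by
      by_contra! h
      have : 2 * (p + 1) ≤ A.index := h3 ▸ Nat.mul_le_mul h (by omega)
      omega
    omega
  have hNA : normalizer (P : Set G) = A := le_antisymm (relIndex_eq_one.1 hr1) hAN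
  have : IsMulCommutative (normalizer (P : Set G)) := hNA ▸ inferInstance
  refine isSolvable_of_index_normalizer_sylow P ?_
  rw [hNA] at hpa h4 hm0 ⊢
  have := Nat.eq_of_dvd_of_lt_two_mul (by omega) hpa (by omega)
  omega

theorem exists_cyclic_index_eq_of_index_lt {G : Type*} [Group G] [Finite G] {p : ℕ}
    [hp : Fact p.Prime] (hpd : p ∣ Nat.card G) (A : Subgroup G) [IsCyclic A]
    (hA : A.index < 2 * p) (P : Sylow p G) :
    ∃ H : Subgroup G, H ≤ (P : Subgroup G) ∧ IsCyclic H ∧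
      (H.subgroupOf (P : Subgroup G)).index = p := by
  have hPc := P.card_eq_multiplicity
  have hb : (Nat.card G).factorization p ≠ 0 :=
    (hp.out.factorization_pos_of_dvd Nat.card_pos.ne' hpd).ne'
  obtain ⟨b, hb⟩ := Nat.exists_eq_succ_of_ne_zero hb
  rw [hb] at hPc
  have hA0 : A.index ≠ 0 := index_ne_zero_of_finite
  have hdvd : p ^ b ∣ Nat.card A := by
    have h1 : p ^ (b + 1) ∣ A.index * Nat.card A := by
      rw [A.index_mul_card, ← hPc]
      exact card_subgroup_dvd_card _
    by_cases hpA : p ∣ A.index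
    · rw [Nat.eq_of_dvd_of_lt_two_mul hA0 hpA hA, pow_succ'] at h1
      exact Nat.dvd_of_mul_dvd_mul_left hp.out.pos h1
    · exact (pow_dvd_pow p b.le_succ).trans (hp.out.prime.pow_dvd_of_dvd_mul_left _ hpA h1)
  obtain ⟨H, hH⟩ := Sylow.exists_subgroup_card_pow_prime p hdvd
  have hHc : Nat.card (H.map A.subtype) = p ^ b := by
    rw [card_map_of_injective A.subtype_injective, hH]
  obtain ⟨T, hT⟩ := (IsPGroup.of_card hHc).exists_le_sylow
  obtain ⟨g, rfl⟩ := MulAction.exists_smul_eq G T P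
  have hHcyc : IsCyclic (H.map A.subtype) :=
    isCyclic_of_injective _ (inclusion_injective (map_subtype_le H))
  have hcard : Nat.card ((H.map A.subtype).map (MulAut.conj g).toMonoidHom) = p ^ b := by
    rw [card_map_of_injective (MulAut.conj g).injective, hHc]
  have hle : (H.map A.subtype).map (MulAut.conj g).toMonoidHom ≤ ((g • T : Sylow p G) : Subgroup G) :=
    map_mono hT
  refine ⟨_, hle, ?_, ?_⟩
  · exact isCyclic_of_surjective _ (MonoidHom.subgroupMap_surjective (MulAut.conj g).toMonoidHom _)
  · have h1 := relIndex_mul_relIndex ⊥ _ _ bot_le hle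
    rw [relIndex_bot_left, relIndex_bot_left, hcard, hPc, pow_succ] at h1
    exact Nat.eq_of_mul_eq_mul_left (pow_pos hp.out.pos b) h1

theorem isSolvable_of_psiC_le {G : Type*} [Group G] [Fintype G] {q : ℕ} (hq : 0 < q)
    (h : ∀ r : ℕ, r.Prime → r ∣ Fintype.card G → q ≤ r)
    (hpsi : psiC (Fintype.card G) ≤ 2 * (q - 1) * psi G) : Group.IsSolvable G := by
  classical
  induction hn : Fintype.card G using Nat.strong_induction_on generalizing G with
  | _ n ih =>
  subst hn
  rcases (Nat.one_le_iff_ne_zero.2 (Fintype.card_ne_zero (α := G))).eq_or_lt with h1 | h1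
  · have := Fintype.card_le_one_iff_subsingleton.1 h1.ge
    infer_instance
  have hne : (Fintype.card G).primeFactors.Nonempty := Nat.nonempty_primeFactors.2 h1
  obtain ⟨p, hp, hmax⟩ : ∃ p ∈ (Fintype.card G).primeFactors,
      ∀ r ∈ (Fintype.card G).primeFactors, r ≤ p :=
    ⟨_, Finset.max'_mem _ hne, fun r hr => Finset.le_max' _ r hr⟩
  have hpp := Nat.prime_of_mem_primeFactors hp
  have hpd := Nat.dvd_of_mem_primeFactors hp
  have := Fact.mk hpp
  obtain ⟨x, hx⟩ := exists_index_zpowers_lt hq (h p hpp hpd)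
    (fun r hr hrd => ⟨h r hr hrd, hmax r (Nat.mem_primeFactors.2 ⟨hr, hrd, Fintype.card_ne_zero⟩)⟩)
    hpsi
  rcases isSolvable_or_exists_normal_cyclic_sylow (zpowers x) hx with hs | ⟨P, hPn, hPc⟩
  · exact hs
  have hcop := P.card_coprime_index
  have hle := psi_le_psi_mul_psi_quotient (P : Subgroup G) hcop
  have hcard : Fintype.card G = Fintype.card P * Fintype.card (G ⧸ (P : Subgroup G)) := by
    simp only [← Nat.card_eq_fintype_card]
    rw [← (P : Subgroup G).card_mul_index, index]
  have hcop' : (Fintype.card P).Coprime (Fintype.card (G ⧸ (P : Subgroup G))) := by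
    rw [← Nat.card_eq_fintype_card, ← Nat.card_eq_fintype_card]; exact hcop
  have hP1 : 1 < Fintype.card P := by
    have := P.dvd_card_of_dvd_card (by rwa [Nat.card_eq_fintype_card])
    rw [Nat.card_eq_fintype_card] at this
    exact hpp.one_lt.trans_le (Nat.le_of_dvd Fintype.card_pos this)
  have hPpos : 0 < psi P := by
    exact Finset.sum_pos (fun x _ => orderOf_pos x) ⟨1, Finset.mem_univ _⟩
  have hquot : psiC (Fintype.card (G ⧸ (P : Subgroup G))) ≤
      2 * (q - 1) * psi (G ⧸ (P : Subgroup G)) := by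
    refine le_of_mul_le_mul_left (a := psi P) ?_ hPpos
    rw [hcard, psiC_mul Fintype.card_ne_zero Fintype.card_ne_zero hcop',
      ← psi_eq_psiC_of_isCyclic P] at hpsi
    calc _ ≤ _ := hpsi
      _ ≤ _ := Nat.mul_le_mul_left _ hle
      _ = _ := by ring
  have hsq := ih _ (by
      rw [hcard]
      exact lt_mul_of_one_lt_left Fintype.card_pos hP1)
    (fun r hr hrd => h r hr (hcard ▸ hrd.mul_left _)) hquot rfl
  have := P.2.isNilpotent
  exact (Group.isSolvable_iff_subgroup_quotient (P : Subgroup G)).2 ⟨inferInstance, hsq⟩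

end Solvability

theorem psi_lt_of_nonsolvable_or_no_cyclic_index_p {G : Type*} [Group G] [Fintype G] (n p : ℕ)
    (hn : Fintype.card G = n) (h1 : 1 < n)
    (hp : p.Prime) (hpd : p ∣ n) (hpmax : ∀ r : ℕ, r.Prime → r ∣ n → r ≤ p)
    (h : ¬ IsSolvable G ∨
      ∃ P : Sylow p G, ¬ ∃ H : Subgroup G, H ≤ (P : Subgroup G) ∧ IsCyclic H ∧
        (H.subgroupOf (P : Subgroup G)).index = p) :
    2 * (n.minFac - 1) * psi G < psiC n ∧ n.minFac * psi G < psiC n := by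
  have hq := (Nat.minFac_prime h1.ne').two_le
  have hmin : ∀ r : ℕ, r.Prime → r ∣ Fintype.card G → n.minFac ≤ r := fun r hr hrd =>
    Nat.minFac_le_of_dvd hr.two_le (hn ▸ hrd)
  have key : 2 * (n.minFac - 1) * psi G < psiC n := by
    by_contra! hle
    rw [← hn] at hle
    nth_rewrite 2 [hn] at hle
    rcases h with h | ⟨P, hP⟩
    · exact h (isSolvable_of_psiC_le (by omega) hmin hle)
    · have := Fact.mk hp
      obtain ⟨x, hx⟩ := exists_index_zpowers_lt (p := p) (by omega) (hmin p hp (hn ▸ hpd))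
        (fun r hr hrd => ⟨hmin r hr hrd, hpmax r hr (hn ▸ hrd)⟩) hle
      exact hP (exists_cyclic_index_eq_of_index_lt
        (by rwa [Nat.card_eq_fintype_card, hn]) (Subgroup.zpowers x) hx P)
  exact ⟨key, (Nat.mul_le_mul_right _ (by omega)).trans_lt key⟩
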